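/- arXiv:1410.8657 — 2 statements merged into one kernel-verified Lean document; each statement's English description precedes it below -/
import Mathlib

section
/- The subgroup of the symmetric group on {1,…,28} generated by the permutations σ₁, σ₂, σ₃ is a finite group of order 6048 (the order of the simple group U₃(3)). -/
open Equiv

/-- σ₁ = (3,8,23,20)(4,24,6,12)(7,9,14,22)(10,19,11,13)(15,16,21,18)(17,26,27,25),
written 0-indexed on `Fin 28`. -/
def sigma1 : Equiv.Perm (Fin 28) :=
  c[(2 : Fin 28), 7, 22, 19] * c[(3 : Fin 28), 23, 5, 11] * c[(6 : Fin 28), 8, 13, 21] *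
    c[(9 : Fin 28), 18, 10, 12] * c[(14 : Fin 28), 15, 20, 17] * c[(16 : Fin 28), 25, 26, 24]

/-- σ₂ = (1,9,20,12,19,23,6,16)(2,27,14,17,13,26,15,25)(3,24)(4,5,10,21,7,11,28,8),
written 0-indexed on `Fin 28`. -/
def sigma2 : Equiv.Perm (Fin 28) :=
  c[(0 : Fin 28), 8, 19, 11, 18, 22, 5, 15] * c[(1 : Fin 28), 26, 13, 16, 12, 25, 14, 24] *
    c[(2 : Fin 28), 23] * c[(3 : Fin 28), 4, 9, 20, 6, 10, 27, 7]

/-- σ₃ = (1,13,20,15,19,2,6,14)(4,9,10,12,7,23,28,16)(5,27,21,17,11,26,8,25)(22,24),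
written 0-indexed on `Fin 28`. -/
def sigma3 : Equiv.Perm (Fin 28) :=
  c[(0 : Fin 28), 12, 19, 14, 18, 1, 5, 13] * c[(3 : Fin 28), 8, 9, 11, 6, 22, 27, 15] *
    c[(4 : Fin 28), 26, 20, 16, 10, 25, 7, 24] * c[(21 : Fin 28), 23]

namespace Stover

open Subgroup

/-- If `H` fixes the point `a`, and the elements `t i` move `a` to distinct points and represent
cosets of `H` which are permuted by the generators `s k`, then the group generated by the `s k` has
order `|ι| * |H|`. -/
theorem card_closure_range_eq_mul {G α ι κ : Type*} [Group G] [Finite G] [MulAction G α]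
    {s : κ → G} {H : Subgroup G} {t : ι → G} (a : α) (i₀ : ι) (hH : H ≤ closure (Set.range s))
    (ht : ∀ i, t i ∈ closure (Set.range s)) (hHa : ∀ h ∈ H, h • a = a)
    (hinj : Function.Injective fun i => t i • a) (hone : t i₀ = 1)
    (hcov : ∀ k i, ∃ j, (t j)⁻¹ * (s k * t i) ∈ H) :
    Nat.card (closure (Set.range s)) = Nat.card ι * Nat.card H := by
  have key : ∀ g ∈ closure (Set.range s), ∃ i, (t i)⁻¹ * g ∈ H := by
    intro g hg
    rw [← mem_toSubmonoid, closure_toSubmonoid_of_finite] at hg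
    induction hg using Submonoid.closure_induction_left with
    | one => exact ⟨i₀, by simp [hone]⟩
    | mul_left x hx y _ ih =>
      obtain ⟨k, rfl⟩ := hx
      obtain ⟨i, hi⟩ := ih
      obtain ⟨j, hj⟩ := hcov k i
      exact ⟨j, by simpa [mul_assoc] using H.mul_mem hj hi⟩
  let f : ι × H → closure (Set.range s) := fun p => ⟨t p.1 * p.2, mul_mem (ht p.1) (hH p.2.2)⟩
  have hf : Function.Bijective f := by
    constructor
    · rintro ⟨i, g, hg⟩ ⟨j, h, hh⟩ hij
      have heq : t i * g = t j * h := congrArg Subtype.val hij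
      have hsmul := congrArg (· • a) heq
      simp only [mul_smul, hHa g hg, hHa h hh] at hsmul
      obtain rfl : i = j := hinj hsmul
      simpa using heq
    · rintro ⟨g, hg⟩
      obtain ⟨i, hi⟩ := key g hg
      exact ⟨(i, ⟨_, hi⟩), by simp [f]⟩
  rw [← Nat.card_prod, Nat.card_congr (Equiv.ofBijective f hf)]

/-- The `x`-th digit of `N` in base 28. -/
def digit (N : ℕ) (x : Fin 28) : Fin 28 := Fin.ofNat 28 (N / 28 ^ x.val)

/-- The permutation whose values are the base 28 digits of `M`, and those of its inverse the digits
of `N`; this form is quick to evaluate in the kernel. -/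
def permOfDigits (M N : ℕ) (hl : ∀ x, digit N (digit M x) = x)
    (hr : ∀ x, digit M (digit N x) = x) : Perm (Fin 28) :=
  ⟨digit M, digit N, hl, hr⟩

/-- The generators of the group, in a form suited to computation. -/
def gen : Fin 3 → Perm (Fin 28)
  | 0 => permOfDigits 33016544694119547223233963931438622573004
    33044257649843379945478214899471325675916 (by decide +kernel) (by decide +kernel)
  | 1 => permOfDigits 8857184566339165609459687398980462841168
    11898843284329694815522273266592189557855 (by decide +kernel) (by decide +kernel)
  | 2 => permOfDigits 18612906721844229144990009454320706837176
    26227538312462321024464338305024055259749 (by decide +kernel) (by decide +kernel)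

theorem gen_zero : gen 0 = sigma1 := Equiv.ext (by decide +kernel)

theorem gen_one : gen 1 = sigma2 := Equiv.ext (by decide +kernel)

theorem gen_two : gen 2 = sigma3 := Equiv.ext (by decide +kernel)

/-- Two generators `σ₃σ₁σ₂` and `σ₂³σ₁σ₃` of the stabilizer of the point 27; the first one also
fixes the point 0 and generates the stabilizer of both points. -/
def stabGen : Fin 2 → Perm (Fin 28)
  | 0 => permOfDigits 32938981891473987484690927057069135032000
    32106487607494373271812288510298809014704 (by decide +kernel) (by decide +kernel)
  | 1 => permOfDigits 32680808458993966033639959663539249222886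
    32685887199740490691269793746338592887481 (by decide +kernel) (by decide +kernel)

/-- Words in `gen`, the `i`-th of which moves 27 to `i`. -/
def transversalWords : List (List (Fin 3)) :=
  [[1, 2], [1, 2, 1], [0, 0, 0, 1], [1, 1], [1, 1, 1], [1, 0, 1], [1, 0, 2], [1], [2, 1, 1],
   [0, 2, 1, 2], [1, 1, 0, 2], [0, 1, 0, 1], [2, 1, 2], [0, 2, 1, 1], [0, 0, 0, 2], [2],
   [0, 2, 1], [0, 0, 2], [0, 0, 2, 1, 2], [0, 0, 1], [0, 2], [2, 0, 1, 1], [0, 1], [0, 1, 1],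
   [2, 1], [0, 0, 2, 1], [2, 1, 1, 1], []]

/-- Words in `stabGen`, the `i`-th of which moves 0 to `i` for `i ≠ 27`. -/
def stabTransversalWords : List (List (Fin 2)) :=
  [[], [1, 0, 1, 1], [1, 0, 1], [1, 1, 1, 1, 1, 1], [0, 1, 0, 1, 1], [1, 1, 0, 1, 1],
   [1, 0, 1, 1, 1], [1, 1, 1, 1], [1, 0, 1, 1, 1, 1], [1, 1, 0, 1], [1], [1, 0, 1, 0, 1], [1, 1],
   [0, 1, 0, 1], [1, 1, 1, 1, 1], [0, 1], [0, 1, 1, 0, 1, 1], [0, 1, 1, 0, 1],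
   [1, 1, 0, 1, 0, 1], [0, 1, 0, 1, 1, 1], [0, 1, 1], [0, 1, 1, 1, 1], [1, 1, 0, 1, 1, 1],
   [1, 1, 1], [0, 1, 1, 1], [0, 1, 0, 1, 0, 1], [1, 0, 1, 1, 0, 1], []]

/-- The element of the group given by the `i`-th entry of `transversalWords`. -/
def transversal (i : Fin 28) : Perm (Fin 28) :=
  ((transversalWords.getD i.val []).map gen).prod

/-- The element of the stabilizer of 27 given by the `i`-th entry of `stabTransversalWords`. -/
def stabTransversal (i : Fin 28) : Perm (Fin 28) :=
  ((stabTransversalWords.getD i.val []).map stabGen).prod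

theorem list_map_prod_mem_closure {G κ : Type*} [Group G] (s : κ → G) (l : List κ) :
    (l.map s).prod ∈ closure (Set.range s) :=
  list_prod_mem fun x hx => by
    obtain ⟨k, -, rfl⟩ := List.mem_map.mp hx
    exact subset_closure ⟨k, rfl⟩

theorem stabGen_mem (k : Fin 2) : stabGen k ∈ closure (Set.range gen) := by
  have hzero : stabGen 0 = ([2, 0, 1].map gen).prod := Equiv.ext (by decide +kernel)
  have hone : stabGen 1 = ([1, 1, 1, 0, 2].map gen).prod := Equiv.ext (by decide +kernel)
  match k with
  | 0 => exact hzero ▸ list_map_prod_mem_closure gen _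
  | 1 => exact hone ▸ list_map_prod_mem_closure gen _

theorem stabGen_zero_pow_eight : stabGen 0 ^ 8 = 1 := Equiv.ext (by decide +kernel)

theorem orderOf_stabGen_zero : orderOf (stabGen 0) = 8 := by
  refine orderOf_eq_prime_pow (p := 2) (n := 2) (fun h => ?_) stabGen_zero_pow_eight
  exact absurd (DFunLike.congr_fun h 2) (by decide +kernel)

theorem stabGen_mul_stabTransversal (k : Fin 2) (i : Fin 27) : ∃ m : Fin 8, ∀ x,
    (stabTransversal (stabGen k i.castSucc)).symm (stabGen k (stabTransversal i.castSucc x)) =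
      (stabGen 0 ^ m.val) x := by
  revert k i
  decide +kernel

theorem gen_mul_transversal (k : Fin 3) (i : Fin 28) : ∃ j : Fin 28, ∃ m : Fin 8, ∀ x,
    (transversal (gen k i)).symm (gen k (transversal i x)) =
      stabTransversal j ((stabGen 0 ^ m.val) x) := by
  have key : ∀ k i, ∃ m : Fin 8, ∀ x,
      (transversal (gen k i)).symm (gen k (transversal i x)) =
        stabTransversal ((transversal (gen k i)).symm (gen k (transversal i 0)))
          ((stabGen 0 ^ m.val) x) := by
    decide +kernel
  exact ⟨_, key k i⟩

theorem smul_eq_of_mem_closure {G α κ : Type*} [Group G] [MulAction G α] {s : κ → G} {a : α}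
    (hs : ∀ k, s k • a = a) {g : G} (hg : g ∈ closure (Set.range s)) : g • a = a := by
  have hle : closure (Set.range s) ≤ MulAction.stabilizer G a :=
    (closure_le _).mpr (by rintro _ ⟨k, rfl⟩; exact hs k)
  exact hle hg

theorem card_closure_stabGen : Nat.card (closure (Set.range stabGen)) = 216 := by
  have hmem : stabGen 0 ∈ closure (Set.range stabGen) := subset_closure ⟨0, rfl⟩
  rw [card_closure_range_eq_mul (H := zpowers (stabGen 0))
    (t := fun i : Fin 27 => stabTransversal i.castSucc) (0 : Fin 28) 0
    ((zpowers_le).mpr hmem) (fun i => list_map_prod_mem_closure _ _) ?_ ?_ rfl ?_,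
    Nat.card_zpowers, orderOf_stabGen_zero, Nat.card_fin]
  · intro g hg
    exact (zpowers_le (H := MulAction.stabilizer _ _)).mpr
      (show stabGen 0 0 = 0 by decide +kernel) hg
  · have heq : ∀ i : Fin 27, stabTransversal i.castSucc 0 = i.castSucc := by decide +kernel
    intro i j hij
    simpa [heq] using hij
  · intro k i
    obtain ⟨m, hm⟩ := stabGen_mul_stabTransversal k i
    have hne : stabGen k i.castSucc ≠ Fin.last 27 := by
      clear hm
      revert k i
      decide +kernel
    refine ⟨(stabGen k i.castSucc).castPred hne, ?_⟩
    rw [Fin.castSucc_castPred]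
    have hpow : (stabTransversal (stabGen k i.castSucc))⁻¹ *
        (stabGen k * stabTransversal i.castSucc) = stabGen 0 ^ m.val := Equiv.ext hm
    rw [hpow]
    exact npow_mem_zpowers _ _

theorem card_closure_gen : Nat.card (closure (Set.range gen)) = 6048 := by
  rw [card_closure_range_eq_mul (H := closure (Set.range stabGen)) (t := transversal)
    (27 : Fin 28) 27 ?_ (fun i => list_map_prod_mem_closure _ _) ?_ ?_ rfl ?_,
    card_closure_stabGen, Nat.card_fin]
  · exact (closure_le _).mpr (by rintro _ ⟨k, rfl⟩; exact stabGen_mem k)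
  · exact fun g => smul_eq_of_mem_closure
      (show ∀ k, stabGen k 27 = 27 by decide +kernel)
  · have heq : ∀ i, transversal i 27 = i := by decide +kernel
    intro i j hij
    simpa [heq] using hij
  · intro k i
    obtain ⟨j, m, hm⟩ := gen_mul_transversal k i
    refine ⟨gen k i, ?_⟩
    have hprod : (transversal (gen k i))⁻¹ * (gen k * transversal i) =
        stabTransversal j * stabGen 0 ^ m.val := Equiv.ext hm
    rw [hprod]
    exact mul_mem (list_map_prod_mem_closure _ _)
      (Subgroup.pow_mem _ (Subgroup.subset_closure (Set.mem_range_self 0)) _)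

end Stover

/-- The subgroup of the symmetric group on 28 letters generated by σ₁, σ₂, σ₃ is a
finite group of order 6048 (the order of the simple group U₃(3)). -/
theorem stover_perm_group_order :
    Nat.card (Subgroup.closure {sigma1, sigma2, sigma3} : Subgroup (Equiv.Perm (Fin 28)))
      = 6048 := by
  have hrange : ({sigma1, sigma2, sigma3} : Set (Perm (Fin 28))) = Set.range Stover.gen := by
    ext g
    simp [Fin.exists_fin_succ, Stover.gen_zero, Stover.gen_one, Stover.gen_two, eq_comm]
  rw [hrange, Stover.card_closure_gen]
end

section
/- The 7-dimensional subspace K_ℂ = span_ℂ(v₁,…,v₇) of ⋀²ℂ⁷ contains no nonzero decomposable vector: for all w₁, w₂ ∈ ℂ⁷, if w₁ ∧ w₂ lies in K_ℂ then w₁ ∧ w₂ = 0. -/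
noncomputable section

open ExteriorAlgebra

/-- The standard basis of ℂ⁷. -/
def e (i : Fin 7) : Fin 7 → ℂ := Pi.single i 1

/-- The wedge product `eᵢ ∧ eⱼ` inside the exterior algebra of ℂ⁷. -/
def wedge (i j : Fin 7) : ExteriorAlgebra ℂ (Fin 7 → ℂ) := ι ℂ (e i) * ι ℂ (e j)

/-- The lexicographic enumeration of the pairs i < j indexing the basis
`f₁ = e₁∧e₂, …, f₂₁ = e₆∧e₇` of ⋀²ℂ⁷ (0-indexed). -/
def pairIdx : Fin 21 → Fin 7 × Fin 7 :=
  ![(0,1), (0,2), (0,3), (0,4), (0,5), (0,6), (1,2), (1,3), (1,4), (1,5), (1,6), (2,3),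
    (2,4), (2,5), (2,6), (3,4), (3,5), (3,6), (4,5), (4,6), (5,6)]

/-- The 7×21 coefficient matrix `ᵗM = (N, 2·I₇)`: row `j` gives the coordinates of `vⱼ`
in the basis `f₁, …, f₂₁` of ⋀²ℂ⁷. -/
def Mcoef : Matrix (Fin 7) (Fin 21) ℂ :=
  !![0,0,2,-2,-2,-2,0,2,2,-2,2,2,2,2,2,0,0,0,0,0,0;
     -1,0,0,2,4,0,1,-3,-3,1,-3,-4,-2,-4,0,2,0,0,0,0,0;
     0,-2,0,-2,-2,0,-2,2,2,0,0,2,2,2,0,0,2,0,0,0,0;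
     -1,-2,2,0,-2,0,-1,1,3,1,1,0,0,2,0,0,0,2,0,0,0;
     -1,1,-1,3,1,3,0,-4,-2,2,0,-4,-2,-2,0,0,0,0,2,0,0;
     0,3,-3,1,-1,1,1,-3,-3,-1,1,0,-2,-2,0,0,0,0,0,2,0;
     1,1,1,3,3,1,2,-2,0,0,0,-2,0,-2,0,0,0,0,0,0,2]

/-- The vectors `v₁, …, v₇`: `vⱼ = Σₖ N_{j,k} fₖ + 2 f_{14+j}`. -/
def v (j : Fin 7) : ExteriorAlgebra ℂ (Fin 7 → ℂ) :=
  ∑ k : Fin 21, Mcoef j k • wedge (pairIdx k).1 (pairIdx k).2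

/-- `K_ℂ = span_ℂ(v₁, …, v₇) ⊆ ⋀²ℂ⁷`. -/
def Kspan : Submodule ℂ (ExteriorAlgebra ℂ (Fin 7 → ℂ)) := Submodule.span ℂ (Set.range v)

/-- The Plücker coordinate `e_i^* ∧ e_j^*` as a linear functional on the exterior algebra. -/
def wedgeCoord (i j : Fin 7) : ExteriorAlgebra ℂ (Fin 7 → ℂ) →ₗ[ℂ] ℂ :=
  liftAlternating (Function.update 0 2
    (Matrix.detRowAlternating.compLinearMap
      (LinearMap.pi ![LinearMap.proj i, LinearMap.proj j] : (Fin 7 → ℂ) →ₗ[ℂ] Fin 2 → ℂ)))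

theorem wedgeCoord_ι_mul_ι (i j : Fin 7) (a b : Fin 7 → ℂ) :
    wedgeCoord i j (ι ℂ a * ι ℂ b) = a i * b j - a j * b i := by
  have h : ι ℂ a * ι ℂ b = ιMulti ℂ 2 ![a, b] := by simp [ιMulti_apply]
  rw [h, wedgeCoord, liftAlternating_apply_ιMulti, Function.update_self,
    AlternatingMap.compLinearMap_apply]
  refine (Matrix.det_fin_two _).trans ?_
  simp [mul_comm (a j)]

theorem wedgeCoord_wedge_pairIdx (k l : Fin 21) :
    wedgeCoord (pairIdx k).1 (pairIdx k).2 (wedge (pairIdx l).1 (pairIdx l).2) =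
      if l = k then 1 else 0 := by
  have h : ∀ k l : Fin 21,
      (if (pairIdx k).1 = (pairIdx l).1 then (1 : ℤ) else 0) *
          (if (pairIdx k).2 = (pairIdx l).2 then 1 else 0) -
        (if (pairIdx k).2 = (pairIdx l).1 then 1 else 0) *
          (if (pairIdx k).1 = (pairIdx l).2 then 1 else 0) =
      if l = k then 1 else 0 := by
    decide +kernel
  rw [wedge, wedgeCoord_ι_mul_ι]
  simp only [e, Pi.single_apply]
  exact_mod_cast h k l

theorem wedgeCoord_sum_smul_v (c : Fin 7 → ℂ) (k : Fin 21) :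
    wedgeCoord (pairIdx k).1 (pairIdx k).2 (∑ j, c j • v j) = ∑ j, c j * Mcoef j k := by
  simp [v, wedgeCoord_wedge_pairIdx]

theorem linearIndependent_v : LinearIndependent ℂ v := by
  rw [Fintype.linearIndependent_iff]
  intro c hc j
  have h (k : Fin 21) : ∑ j, c j * Mcoef j k = 0 := by
    rw [← wedgeCoord_sum_smul_v, hc, map_zero]
  fin_cases j
  · simpa [Mcoef, Fin.sum_univ_succ] using h 14
  · simpa [Mcoef, Fin.sum_univ_succ] using h 15
  · simpa [Mcoef, Fin.sum_univ_succ] using h 16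
  · simpa [Mcoef, Fin.sum_univ_succ] using h 17
  · simpa [Mcoef, Fin.sum_univ_succ] using h 18
  · simpa [Mcoef, Fin.sum_univ_succ] using h 19
  · simpa [Mcoef, Fin.sum_univ_succ] using h 20

/-- The Plücker quadrics, restricted to the coefficient vectors of elements of `Kspan`, span all
quadratic forms; in particular every square `c j ^ 2` is a combination of them. -/
theorem eq_zero_of_pluecker (c : Fin 7 → ℂ) (p : Fin 7 → Fin 7 → ℂ)
    (q : ∀ i j k l, p i j * p k l - p i k * p j l + p i l * p j k = 0)
    (hp : ∀ k, p (pairIdx k).1 (pairIdx k).2 = ∑ j, c j * Mcoef j k) : c = 0 := by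
  have p01 : p 0 1 = -c 1 - c 3 - c 4 + c 6 :=
    (hp 0).trans (by simp [Mcoef, Fin.sum_univ_succ]; ring)
  have p02 : p 0 2 = -2 * c 2 - 2 * c 3 + c 4 + 3 * c 5 + c 6 :=
    (hp 1).trans (by simp [Mcoef, Fin.sum_univ_succ]; ring)
  have p03 : p 0 3 = 2 * c 0 + 2 * c 3 - c 4 - 3 * c 5 + c 6 :=
    (hp 2).trans (by simp [Mcoef, Fin.sum_univ_succ]; ring)
  have p04 : p 0 4 = -2 * c 0 + 2 * c 1 - 2 * c 2 + 3 * c 4 + c 5 + 3 * c 6 :=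
    (hp 3).trans (by simp [Mcoef, Fin.sum_univ_succ]; ring)
  have p05 : p 0 5 = -2 * c 0 + 4 * c 1 - 2 * c 2 - 2 * c 3 + c 4 - c 5 + 3 * c 6 :=
    (hp 4).trans (by simp [Mcoef, Fin.sum_univ_succ]; ring)
  have p06 : p 0 6 = -2 * c 0 + 3 * c 4 + c 5 + c 6 :=
    (hp 5).trans (by simp [Mcoef, Fin.sum_univ_succ]; ring)
  have p12 : p 1 2 = c 1 - 2 * c 2 - c 3 + c 5 + 2 * c 6 :=
    (hp 6).trans (by simp [Mcoef, Fin.sum_univ_succ]; ring)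
  have p13 : p 1 3 = 2 * c 0 - 3 * c 1 + 2 * c 2 + c 3 - 4 * c 4 - 3 * c 5 - 2 * c 6 :=
    (hp 7).trans (by simp [Mcoef, Fin.sum_univ_succ]; ring)
  have p14 : p 1 4 = 2 * c 0 - 3 * c 1 + 2 * c 2 + 3 * c 3 - 2 * c 4 - 3 * c 5 :=
    (hp 8).trans (by simp [Mcoef, Fin.sum_univ_succ]; ring)
  have p15 : p 1 5 = -2 * c 0 + c 1 + c 3 + 2 * c 4 - c 5 :=
    (hp 9).trans (by simp [Mcoef, Fin.sum_univ_succ]; ring)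
  have p16 : p 1 6 = 2 * c 0 - 3 * c 1 + c 3 + c 5 :=
    (hp 10).trans (by simp [Mcoef, Fin.sum_univ_succ]; ring)
  have p23 : p 2 3 = 2 * c 0 - 4 * c 1 + 2 * c 2 - 4 * c 4 - 2 * c 6 :=
    (hp 11).trans (by simp [Mcoef, Fin.sum_univ_succ]; ring)
  have p24 : p 2 4 = 2 * c 0 - 2 * c 1 + 2 * c 2 - 2 * c 4 - 2 * c 5 :=
    (hp 12).trans (by simp [Mcoef, Fin.sum_univ_succ]; ring)
  have p25 : p 2 5 = 2 * c 0 - 4 * c 1 + 2 * c 2 + 2 * c 3 - 2 * c 4 - 2 * c 5 - 2 * c 6 :=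
    (hp 13).trans (by simp [Mcoef, Fin.sum_univ_succ]; ring)
  have p26 : p 2 6 = 2 * c 0 :=
    (hp 14).trans (by simp [Mcoef, Fin.sum_univ_succ]; ring)
  have p34 : p 3 4 = 2 * c 1 :=
    (hp 15).trans (by simp [Mcoef, Fin.sum_univ_succ]; ring)
  have p35 : p 3 5 = 2 * c 2 :=
    (hp 16).trans (by simp [Mcoef, Fin.sum_univ_succ]; ring)
  have p36 : p 3 6 = 2 * c 3 :=
    (hp 17).trans (by simp [Mcoef, Fin.sum_univ_succ]; ring)
  have p45 : p 4 5 = 2 * c 4 :=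
    (hp 18).trans (by simp [Mcoef, Fin.sum_univ_succ]; ring)
  have p46 : p 4 6 = 2 * c 5 :=
    (hp 19).trans (by simp [Mcoef, Fin.sum_univ_succ]; ring)
  have p56 : p 5 6 = 2 * c 6 :=
    (hp 20).trans (by simp [Mcoef, Fin.sum_univ_succ]; ring)
  have q0123 := q 0 1 2 3
  have q0124 := q 0 1 2 4
  have q0125 := q 0 1 2 5
  have q0126 := q 0 1 2 6
  have q0134 := q 0 1 3 4
  have q0135 := q 0 1 3 5
  have q0136 := q 0 1 3 6
  have q0145 := q 0 1 4 5
  have q0146 := q 0 1 4 6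
  have q0156 := q 0 1 5 6
  have q0234 := q 0 2 3 4
  have q0235 := q 0 2 3 5
  have q0236 := q 0 2 3 6
  have q0245 := q 0 2 4 5
  have q0246 := q 0 2 4 6
  have q0256 := q 0 2 5 6
  have q0345 := q 0 3 4 5
  have q0346 := q 0 3 4 6
  have q0356 := q 0 3 5 6
  have q1234 := q 1 2 3 4
  have q1235 := q 1 2 3 5
  have q1236 := q 1 2 3 6
  have q1245 := q 1 2 4 5
  have q1246 := q 1 2 4 6
  have q1256 := q 1 2 5 6
  have q1345 := q 1 3 4 5
  have q1346 := q 1 3 4 6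
  have q2345 := q 2 3 4 5
  simp only [p01, p02, p03, p04, p05, p06, p12, p13, p14, p15, p16, p23, p24, p25, p26, p34,
    p35, p36, p45, p46, p56] at *
  have hc0 : c 0 ^ 2 = 0 := by
    linear_combination (1 / 24 : ℂ) * (5 * q0123 - 6 * q0124 + 3 * q0125 + q0135 + q0136 - 5 *
      q0145 + q0146 - 7 * q0156 + 2 * q0234 - 4 * q0235 - 2 * q0236 + 5 * q0245 + 5 * q0246 +
      q0256 - 3 * q0345 - q0356 - 6 * q1234 + 5 * q1235 + 2 * q1236 - 2 * q1245 - 2 * q1246 + 5 *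
      q1256 - 3 * q1345 + q1346 - 2 * q2345)
  have hc1 : c 1 ^ 2 = 0 := by
    linear_combination (1 / 24 : ℂ) * (-7 * q0123 + 9 * q0125 - 6 * q0134 + 4 * q0135 + q0136 -
      2 * q0145 - 5 * q0146 + 2 * q0156 + 2 * q0234 - q0235 + q0236 - q0245 - q0246 - 2 * q0256 -
      4 * q0356 + 3 * q1234 + 2 * q1235 - q1236 + 4 * q1245 + q1246 - q1256 + 3 * q1345 + q1346 -
      5 * q2345)
  have hc2 : c 2 ^ 2 = 0 := by
    linear_combination (1 / 24 : ℂ) * (5 * q0123 + 6 * q0134 + q0135 - 2 * q0136 - 2 * q0145 + 4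
      * q0146 - 7 * q0156 - 4 * q0234 - q0235 + q0236 - q0245 + 5 * q0246 + q0256 - 6 * q0345 -
      q0356 - q1235 - q1236 + q1245 - 8 * q1246 + 5 * q1256 - 5 * q1346 - 5 * q2345)
  have hc3 : c 3 ^ 2 = 0 := by
    linear_combination (1 / 24 : ℂ) * (-7 * q0123 + 9 * q0124 - 3 * q0125 - 3 * q0126 + 3 *
      q0134 + q0135 - 2 * q0136 - 2 * q0145 - 2 * q0146 - q0156 - q0234 + 2 * q0235 - 2 * q0236 -
      q0245 - 4 * q0246 + q0256 - 6 * q0346 + 2 * q0356 + 3 * q1234 - q1235 + 5 * q1236 + q1245 +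
      q1246 - q1256 + 3 * q1345 + q1346 + q2345)
  have hc4 : c 4 ^ 2 = 0 := by
    linear_combination (1 / 24 : ℂ) * (2 * q0123 + 3 * q0124 - 12 * q0125 - 9 * q0126 + 6 *
      q0134 - 8 * q0135 - 2 * q0136 + q0145 + 4 * q0146 - 4 * q0156 - 4 * q0234 - q0235 + q0236 +
      2 * q0245 - 7 * q0246 + 7 * q0256 - 6 * q0345 - 9 * q0346 + 5 * q0356 + 2 * q1235 + 2 *
      q1236 - 8 * q1245 + q1246 - q1256 + 4 * q1346 + q2345)
  have hc5 : c 5 ^ 2 = 0 := by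
    linear_combination (1 / 24 : ℂ) * (2 * q0123 - 6 * q0124 + 6 * q0126 - 3 * q0134 + 4 * q0135
      + 7 * q0136 + q0145 + q0146 - q0156 + 5 * q0234 - 4 * q0235 - 5 * q0236 + 5 * q0245 - q0246
      + 7 * q0256 + 2 * q0356 - 3 * q1234 - 4 * q1235 - q1236 + q1245 + q1246 - q1256 - 2 * q1346
      - 2 * q2345)
  have hc6 : c 6 ^ 2 = 0 := by
    linear_combination (1 / 24 : ℂ) * (8 * q0123 - 6 * q0125 + q0135 + 7 * q0136 - 5 * q0145 + 4
      * q0146 - 4 * q0156 - 7 * q0234 + 2 * q0235 + q0236 - q0245 + 2 * q0246 + 4 * q0256 - 6 *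
      q0345 + 3 * q0346 + 5 * q0356 - q1235 - 7 * q1236 + 4 * q1245 + q1246 + 5 * q1256 + 6 *
      q1345 - 2 * q1346 - 5 * q2345)
  funext j
  fin_cases j
  · exact pow_eq_zero_iff two_ne_zero |>.mp hc0
  · exact pow_eq_zero_iff two_ne_zero |>.mp hc1
  · exact pow_eq_zero_iff two_ne_zero |>.mp hc2
  · exact pow_eq_zero_iff two_ne_zero |>.mp hc3
  · exact pow_eq_zero_iff two_ne_zero |>.mp hc4
  · exact pow_eq_zero_iff two_ne_zero |>.mp hc5
  · exact pow_eq_zero_iff two_ne_zero |>.mp hc6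

/-- The 7-dimensional subspace `K_ℂ` contains no nonzero decomposable vector: if
`w₁ ∧ w₂ ∈ K_ℂ` then `w₁ ∧ w₂ = 0`. -/
theorem Kspan_no_decomposable :
    Module.finrank ℂ Kspan = 7 ∧
      ∀ w₁ w₂ : Fin 7 → ℂ, ι ℂ w₁ * ι ℂ w₂ ∈ Kspan → ι ℂ w₁ * ι ℂ w₂ = 0 := by
  refine ⟨(finrank_span_eq_card linearIndependent_v).trans (Fintype.card_fin 7),
    fun w₁ w₂ hw => ?_⟩
  obtain ⟨c, hc⟩ := (Submodule.mem_span_range_iff_exists_fun ℂ).mp hw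
  have hc0 : c = 0 := by
    refine eq_zero_of_pluecker c (fun i j => w₁ i * w₂ j - w₁ j * w₂ i)
      (fun i j k l => by ring) fun k => ?_
    rw [← wedgeCoord_sum_smul_v, hc, wedgeCoord_ι_mul_ι]
  simp [← hc, hc0]

end
end
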